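/- arXiv:1902.07408 — 2 statements merged into one kernel-verified Lean document; each statement's English description precedes it below -/
import Mathlib

section
/- Let A ⊆ F_{2^n} × F_{2^n} satisfy |A| >= n^3 · 2^n, and let W = {(x, αx) : x ∈ F_{2^n}} for uniformly random α ∈ F_{2^n}. Then with probability at least 1 - 1/n^2 over α, the sumset W + A covers all but at most 2^{2n}/n points of F_{2^n} × F_{2^n}. -/
open Classical


theorem fiber_sum {K : Type*} [Field K] [Fintype K] (A : Finset (K × K)) (α : K) :
    ∑ t : K, ((A.filter (fun a => a.2 - α * a.1 = t)).card : ℝ) = A.card := by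
  have h := Finset.card_eq_sum_card_fiberwise (s := A) (t := Finset.univ)
    (f := fun a : K × K => a.2 - α * a.1) (fun _ _ => by simp)
  rw [h]; push_cast; rfl

theorem fiber_sq {K : Type*} [Field K] [Fintype K] (A : Finset (K × K)) (α : K) :
    ∑ t : K, ((A.filter (fun a => a.2 - α * a.1 = t)).card : ℝ) ^ 2 =
      ∑ a ∈ A, ∑ b ∈ A, if a.2 - α * a.1 = b.2 - α * b.1 then (1 : ℝ) else 0 := by
  have h : ∀ t : K, ((A.filter (fun a => a.2 - α * a.1 = t)).card : ℝ) ^ 2 =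
      ∑ a ∈ A, ∑ b ∈ A, (if a.2 - α * a.1 = t then (1 : ℝ) else 0) *
        (if b.2 - α * b.1 = t then (1 : ℝ) else 0) := by
    intro t
    rw [sq, ← Finset.sum_mul_sum, Finset.sum_boole]
  simp_rw [h]
  rw [Finset.sum_comm]
  refine Finset.sum_congr rfl fun a _ => ?_
  rw [Finset.sum_comm]
  refine Finset.sum_congr rfl fun b _ => ?_
  simp [eq_comm]

theorem pair_alpha {K : Type*} [Field K] [Fintype K] (a b : K × K) :
    ∑ α : K, (if a.2 - α * a.1 = b.2 - α * b.1 then (1 : ℝ) else 0) ≤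
      1 + if a = b then (Fintype.card K : ℝ) else 0 := by
  by_cases hab : a = b
  · subst hab; simp
  · rw [Finset.sum_boole, if_neg hab, add_zero]
    norm_cast
    rw [Finset.card_le_one]
    intro x hx y hy
    simp only [Finset.mem_filter, Finset.mem_univ, true_and] at hx hy
    have h1 : (x - y) * (a.1 - b.1) = 0 := by linear_combination hy - hx
    rcases mul_eq_zero.1 h1 with h | h
    · exact sub_eq_zero.1 h
    · exfalso
      apply hab
      have h2 : a.1 = b.1 := sub_eq_zero.1 h
      refine Prod.ext h2 ?_
      rw [h2] at hx
      exact sub_left_inj.1 hx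

theorem total_sq {K : Type*} [Field K] [Fintype K] (A : Finset (K × K)) :
    ∑ α : K, ∑ t : K, ((A.filter (fun a => a.2 - α * a.1 = t)).card : ℝ) ^ 2 ≤
      (A.card : ℝ) ^ 2 + Fintype.card K * A.card := by
  simp_rw [fiber_sq]
  rw [Finset.sum_comm]
  calc _ = ∑ a ∈ A, ∑ b ∈ A, ∑ α : K,
        (if a.2 - α * a.1 = b.2 - α * b.1 then (1 : ℝ) else 0) :=
        Finset.sum_congr rfl fun a _ => Finset.sum_comm
    _ ≤ ∑ a ∈ A, ∑ b ∈ A, (1 + if a = b then (Fintype.card K : ℝ) else 0) :=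
        Finset.sum_le_sum fun a _ => Finset.sum_le_sum fun b _ => pair_alpha a b
    _ = ∑ a ∈ A, ((A.card : ℝ) + Fintype.card K) := by
        refine Finset.sum_congr rfl fun a ha => ?_
        rw [Finset.sum_add_distrib, Finset.sum_ite_eq, if_pos ha]
        simp
    _ = _ := by
        rw [Finset.sum_const, nsmul_eq_mul]; ring

theorem empty_bound {K : Type*} [Field K] [Fintype K] (A : Finset (K × K)) (α : K) :
    ((Finset.univ.filter (fun t : K => A.filter (fun a => a.2 - α * a.1 = t) = ∅)).card : ℝ)
      * (A.card : ℝ) ^ 2 ≤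
    (Fintype.card K : ℝ) ^ 2 *
      ∑ t : K, ((A.filter (fun a => a.2 - α * a.1 = t)).card : ℝ) ^ 2
      - Fintype.card K * (A.card : ℝ) ^ 2 := by
  set q : ℝ := (Fintype.card K : ℝ) with hq
  set m : ℝ := (A.card : ℝ) with hm
  have h1 : ∑ t : K, (q * ((A.filter (fun a => a.2 - α * a.1 = t)).card : ℝ) - m) ^ 2 =
      q ^ 2 * ∑ t : K, ((A.filter (fun a => a.2 - α * a.1 = t)).card : ℝ) ^ 2 - q * m ^ 2 := by
    have h0 := fiber_sum A α
    have : ∀ t : K, (q * ((A.filter (fun a => a.2 - α * a.1 = t)).card : ℝ) - m) ^ 2 =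
      q ^ 2 * ((A.filter (fun a => a.2 - α * a.1 = t)).card : ℝ) ^ 2
       - 2 * q * m * ((A.filter (fun a => a.2 - α * a.1 = t)).card : ℝ) + m ^ 2 := by
      intro t; ring
    simp_rw [this]
    rw [Finset.sum_add_distrib, Finset.sum_sub_distrib, ← Finset.mul_sum, ← Finset.mul_sum, h0,
      Finset.sum_const, nsmul_eq_mul, Finset.card_univ, ← hq, ← hm]
    ring
  rw [← h1]
  calc _ = ∑ t ∈ Finset.univ.filter
          (fun t : K => A.filter (fun a => a.2 - α * a.1 = t) = ∅),
          (q * ((A.filter (fun a => a.2 - α * a.1 = t)).card : ℝ) - m) ^ 2 := by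
        rw [← nsmul_eq_mul, ← Finset.sum_const]
        refine Finset.sum_congr rfl fun t ht => ?_
        rw [(Finset.mem_filter.1 ht).2]; simp
    _ ≤ _ := Finset.sum_le_sum_of_subset_of_nonneg (Finset.filter_subset _ _)
        fun _ _ _ => sq_nonneg _

theorem uncovered_bound {K : Type*} [Field K] [Fintype K] (A : Finset (K × K)) (α : K) :
    (Finset.univ.filter (fun u : K × K =>
              ¬∃ x : K, ∃ a ∈ A, u = (x, α * x) + a)).card ≤ Fintype.card K *
    (Finset.univ.filter (fun t : K => A.filter (fun a => a.2 - α * a.1 = t) = ∅)).card := by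
  refine Finset.card_le_mul_card_image_of_maps_to (f := fun u : K × K => u.2 - α * u.1) ?_ _ ?_
  · intro u hu
    simp only [Finset.mem_filter, Finset.mem_univ, true_and] at hu ⊢
    rw [Finset.filter_eq_empty_iff]
    intro a ha h
    refine hu ⟨u.1 - a.1, a, ha, Prod.ext (by simp) ?_⟩
    simp only [Prod.snd_add]
    linear_combination -h
  · intro t _
    rw [← Finset.card_univ]
    refine Finset.card_le_card_of_injOn Prod.fst (fun _ _ => by simp) ?_
    intro u hu v hv h
    simp only [Finset.coe_filter, Set.mem_ofPred_eq] at hu hv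
    refine Prod.ext h ?_
    have h1 := hu.2
    have h2 := hv.2
    linear_combination h1 - h2 + α * h

/-- For a field `K` with `2^n` elements and a subset `A ⊆ K × K` with
`|A| ≥ n³·2^n`: with probability at least `1 - 1/n²` over a uniformly random
`α ∈ K`, the sumset `W + A` of the Wozencraft code `W = {(x, αx) : x ∈ K}`
with `A` covers all but at most `2^{2n}/n` points of `K × K`. -/
theorem stmt_12 (n : ℕ) (hn : 0 < n) {K : Type*} [Field K] [Fintype K]
    (hK : Fintype.card K = 2 ^ n) (A : Finset (K × K))
    (hA : ((n : ℝ) ^ 3 * 2 ^ n) ≤ (A.card : ℝ)) :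
    (1 - 1 / (n : ℝ) ^ 2) * (Fintype.card K : ℝ) ≤
      ((Finset.univ.filter (fun α : K =>
          ((Finset.univ.filter (fun u : K × K =>
              ¬∃ x : K, ∃ a ∈ A, u = (x, α * x) + a)).card : ℝ) ≤
            (2 ^ (2 * n) : ℝ) / (n : ℝ))).card : ℝ) := by
  set q : ℝ := (Fintype.card K : ℝ) with hq
  set m : ℝ := (A.card : ℝ) with hm
  have hq2 : q = 2 ^ n := by rw [hq, hK]; push_cast; rfl
  have hn' : (0 : ℝ) < n := by exact_mod_cast hn
  have hq0 : 0 < q := by rw [hq2]; positivity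
  have hm0 : 0 < m := lt_of_lt_of_le (by positivity) hA
  rw [← hq2] at hA
  rw [show (2 : ℝ) ^ (2 * n) = q ^ 2 by rw [hq2, ← pow_mul, mul_comm]]
  set U : K → ℝ := fun α => ((Finset.univ.filter (fun u : K × K =>
              ¬∃ x : K, ∃ a ∈ A, u = (x, α * x) + a)).card : ℝ) with hU
  have hsum : (∑ α, U α) * m ^ 2 ≤ q ^ 4 * m := by
    calc (∑ α, U α) * m ^ 2 = ∑ α, U α * m ^ 2 := Finset.sum_mul _ _ _
      _ ≤ ∑ α : K, (q ^ 3 * ∑ t : K, ((A.filter (fun a => a.2 - α * a.1 = t)).card : ℝ) ^ 2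
            - q ^ 2 * m ^ 2) := by
          refine Finset.sum_le_sum fun α _ => ?_
          have h1 : U α ≤ q * ((Finset.univ.filter
            (fun t : K => A.filter (fun a => a.2 - α * a.1 = t) = ∅)).card : ℝ) := by
            have := uncovered_bound A α
            simp only [hU, hq]; exact_mod_cast this
          have h2 := mul_le_mul_of_nonneg_left (empty_bound A α) hq0.le
          have h3 := mul_le_mul_of_nonneg_right h1 (sq_nonneg m)
          rw [← hq, ← hm] at h2
          linarith
      _ = q ^ 3 * (∑ α : K, ∑ t : K, ((A.filter (fun a => a.2 - α * a.1 = t)).card : ℝ) ^ 2)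
            - q ^ 3 * m ^ 2 := by
          rw [Finset.sum_sub_distrib, ← Finset.mul_sum, Finset.sum_const, nsmul_eq_mul,
            Finset.card_univ, ← hq]
          ring
      _ ≤ q ^ 3 * (m ^ 2 + q * m) - q ^ 3 * m ^ 2 := by
          have := mul_le_mul_of_nonneg_left (total_sq A) (pow_pos hq0 3).le
          linarith
      _ = _ := by ring
  have hsum2 : (∑ α, U α) * m ≤ q ^ 4 := by
    refine le_of_mul_le_mul_right ?_ hm0
    linarith
  have hU0 : ∀ α, 0 ≤ U α := fun α => Nat.cast_nonneg _
  have hsum3 : (∑ α, U α) * n ^ 3 ≤ q ^ 3 := by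
    refine le_of_mul_le_mul_right ?_ hq0
    have := mul_le_mul_of_nonneg_left hA (Finset.sum_nonneg fun α (_ : α ∈ Finset.univ) => hU0 α)
    nlinarith
  have hsplit := Finset.card_filter_add_card_filter_not (s := (Finset.univ : Finset K))
    (fun α => U α ≤ q ^ 2 / n)
  have hsplit' : ((Finset.univ.filter (fun α => U α ≤ q ^ 2 / n)).card : ℝ) +
      ((Finset.univ.filter (fun α => ¬ U α ≤ q ^ 2 / n)).card : ℝ) = q := by
    rw [Finset.card_univ] at hsplit
    have h := congrArg (Nat.cast : ℕ → ℝ) hsplit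
    rw [Nat.cast_add] at h
    exact h
  set B : ℝ := ((Finset.univ.filter (fun α => ¬ U α ≤ q ^ 2 / n)).card : ℝ) with hB
  have hmark : B * (q ^ 2 / n) ≤ ∑ α, U α := by
    calc B * (q ^ 2 / n) = ∑ α ∈ Finset.univ.filter (fun α => ¬ U α ≤ q ^ 2 / n), q ^ 2 / n := by
          rw [Finset.sum_const, nsmul_eq_mul]
      _ ≤ ∑ α ∈ Finset.univ.filter (fun α => ¬ U α ≤ q ^ 2 / n), U α :=
          Finset.sum_le_sum fun α h => (not_le.1 (Finset.mem_filter.1 h).2).le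
      _ ≤ _ := Finset.sum_le_sum_of_subset_of_nonneg (Finset.filter_subset _ _)
          fun α _ _ => hU0 α
  have hfin : B ≤ 1 / (n : ℝ) ^ 2 * q := by
    have h1 := mul_le_mul_of_nonneg_right hmark (pow_pos hn' 3).le
    have h2 : B * (q ^ 2 / n) * n ^ 3 = B * n ^ 2 * q ^ 2 := by field_simp
    have h3 : B * n ^ 2 ≤ q := by
      refine le_of_mul_le_mul_right ?_ (pow_pos hq0 2)
      nlinarith
    rw [one_div_mul_eq_div, le_div_iff₀ (by positivity)]
    exact h3
  have : (1 - 1 / (n : ℝ) ^ 2) * q = q - 1 / (n : ℝ) ^ 2 * q := by ring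
  rw [this]
  linarith
end

section
/- Let A = B_r ⊆ F_2^{2n} be the Hamming ball of radius r <= n/2 centered at 0, and let S = {(a_1, a_2) ∈ A × A : a_1 ≠ a_2 and the first n coordinates of a_1 and a_2 agree}. Then |S| <= binom(n, floor(n/2)) · |A|. -/
open Classical

/-- Binomial coefficients in a form that the kernel evaluates quickly. -/
def chs (n k : ℕ) : ℕ := n.descFactorial k / k.factorial

/-- Size of a Hamming ball of radius `k`. -/
def fV (n : ℕ) : ℕ → ℕ
  | 0 => 1
  | k+1 => fV n k + chs n (k+1)

/-- Partial sums counting pairs. -/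
def fS (n r : ℕ) : ℕ → ℕ
  | 0 => 0
  | i+1 => fS n r i + (fun v => chs n i * (v * (v-1))) (fV n (r-i))

/-- Partial sums counting points. -/
def fA (n r : ℕ) : ℕ → ℕ
  | 0 => 0
  | i+1 => fA n r i + chs n i * (fV n (r-i))

set_option maxRecDepth 100000 in
theorem small_cases : ∀ n < 36, ∀ r < n/2+1,
    fS n r (r+1) ≤ chs n (n/2) * fA n r (r+1) := by
  decide +kernel

theorem chs_eq (n k : ℕ) : chs n k = n.choose k :=
  (Nat.choose_eq_descFactorial_div_factorial n k).symm

theorem fV_eq (n k : ℕ) : fV n k = ∑ j ∈ Finset.range (k+1), n.choose j := by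
  induction k with
  | zero => simp [fV]
  | succ k ih => rw [Finset.sum_range_succ, ← ih, fV, chs_eq]

theorem fV_succ (n k : ℕ) : fV n (k+1) = fV n k + n.choose (k+1) := by
  rw [fV, chs_eq]

theorem fS_eq (n r m : ℕ) : fS n r m =
    ∑ i ∈ Finset.range m, n.choose i * (fV n (r-i) * (fV n (r-i) - 1)) := by
  induction m with
  | zero => simp [fS]
  | succ k ih => rw [Finset.sum_range_succ, ← ih, fS, chs_eq]

theorem fA_eq (n r m : ℕ) : fA n r m =
    ∑ i ∈ Finset.range m, n.choose i * fV n (r-i) := by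
  induction m with
  | zero => simp [fA]
  | succ k ih => rw [Finset.sum_range_succ, ← ih, fA, chs_eq]

section poly
open Polynomial

theorem coeff_lin_pow (a n k : ℕ) :
    ((1 + C a * X : ℕ[X]) ^ n).coeff k = n.choose k * a ^ k := by
  have : (1 + C a * X : ℕ[X]) ^ n = ((1 + X : ℕ[X]) ^ n).comp (C a * X) := by
    simp
  rw [this, comp_C_mul_X_coeff, coeff_one_add_X_pow]
  simp

theorem coeff_mul_mono (p q p' q' : ℕ[X]) (h : ∀ k, p.coeff k ≤ q.coeff k)
    (h' : ∀ k, p'.coeff k ≤ q'.coeff k) (k : ℕ) : (p * p').coeff k ≤ (q * q').coeff k := by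
  rw [coeff_mul, coeff_mul]
  exact Finset.sum_le_sum fun x _ => Nat.mul_le_mul (h _) (h' _)

theorem coeff_pow_mono (p q : ℕ[X]) (h : ∀ k, p.coeff k ≤ q.coeff k) (n : ℕ) :
    ∀ k, (p ^ n).coeff k ≤ (q ^ n).coeff k := by
  induction n with
  | zero => simp
  | succ n ih =>
    intro k
    rw [pow_succ, pow_succ]
    exact coeff_mul_mono _ _ _ _ ih h k

theorem P_bound (n s : ℕ) :
    2 ^ s * (∑ x ∈ Finset.HasAntidiagonal.antidiagonal s, n.choose x.1 * (n.choose x.2 * 2 ^ x.2))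
      ≤ 3 ^ s * (2 * n).choose s := by
  have h := coeff_pow_mono ((1 + C 2 * X) * (1 + C 4 * X) : ℕ[X]) ((1 + C 3 * X) ^ 2) (by
    intro k
    have : ((1 + C 3 * X) ^ 2 : ℕ[X]) = (1 + C 2 * X) * (1 + C 4 * X) + X ^ 2 := by
      simp only [map_ofNat]
      ring
    rw [this, coeff_add]
    exact Nat.le_add_right _ _) n s
  rw [mul_pow, ← pow_mul, coeff_lin_pow, coeff_mul] at h
  simp only [coeff_lin_pow] at h
  rw [mul_comm (3 ^ s)]
  refine le_trans (le_of_eq ?_) h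
  rw [Finset.mul_sum]
  refine Finset.sum_congr rfl fun x hx => ?_
  rw [← Finset.HasAntidiagonal.mem_antidiagonal.1 hx, pow_add, show 4 = 2 * 2 from rfl, mul_pow]
  ring

end poly

theorem conv_sum (f g : ℕ → ℕ) (r : ℕ) :
    ∑ i ∈ Finset.range (r+1), f i * (∑ j ∈ Finset.range (r-i+1), g j)
      = ∑ s ∈ Finset.range (r+1), ∑ x ∈ Finset.HasAntidiagonal.antidiagonal s, f x.1 * g x.2 := by
  simp only [Finset.Nat.sum_antidiagonal_eq_sum_range_succ (fun i j => f i * g j)]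
  rw [Finset.sum_range_diag_flip (r+1) (fun i j => f i * g j)]
  refine Finset.sum_congr rfl fun i hi => ?_
  rw [Finset.mul_sum]
  have := Finset.mem_range.1 hi
  rw [show r + 1 - i = r - i + 1 by omega]

theorem fA_choose (n r : ℕ) :
    fA n r (r+1) = ∑ s ∈ Finset.range (r+1), (2*n).choose s := by
  rw [fA_eq]
  simp only [fV_eq]
  rw [conv_sum]
  refine Finset.sum_congr rfl fun s _ => ?_
  rw [two_mul, Nat.add_choose_eq]

theorem fV_bound (n k : ℕ) : 2 ^ n * fV n k ≤ 3 ^ n * 2 ^ k := by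
  have h : (∑ j ∈ Finset.range (n+1), n.choose j * 2 ^ (n - j)) = 3 ^ n := by
    have := add_pow (1:ℕ) 2 n
    rw [show 1 + 2 = 3 from rfl] at this
    rw [this]
    exact Finset.sum_congr rfl fun j _ => by simp [mul_comm]
  rw [← h, fV_eq, Finset.mul_sum, Finset.sum_mul]
  calc ∑ j ∈ Finset.range (k+1), 2 ^ n * n.choose j
      ≤ ∑ j ∈ Finset.range (k+1), (if j < n + 1 then n.choose j * 2 ^ (n-j) * 2 ^ k else 0) := by
        refine Finset.sum_le_sum fun j hj => ?_
        have hj := Finset.mem_range.1 hj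
        split_ifs with hn
        · rw [mul_assoc, ← pow_add, mul_comm]
          exact Nat.mul_le_mul_left _ (Nat.pow_le_pow_right (by norm_num) (by omega))
        · rw [Nat.choose_eq_zero_of_lt (by omega)]; simp
    _ ≤ ∑ j ∈ Finset.range (n+1), n.choose j * 2 ^ (n-j) * 2 ^ k := by
        rw [← Finset.sum_filter]
        refine Finset.sum_le_sum_of_subset fun j hj => ?_
        simp at hj ⊢
        omega

theorem sq_bound (n k : ℕ) : 2 ^ n * (fV n k * fV n k) ≤
    2 * 3 ^ n * ∑ j ∈ Finset.range (k+1), n.choose j * 2 ^ j := by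
  induction k with
  | zero =>
    simp [fV]
    have : 2 ^ n ≤ 3 ^ n := Nat.pow_le_pow_left (by norm_num) n
    omega
  | succ k ih =>
    rw [Finset.sum_range_succ, mul_add]
    have h1 := fV_bound n (k+1)
    have h2 := fV_succ n k
    have h3 : 2 ^ n * (fV n (k+1) * fV n (k+1)) ≤ 2 ^ n * (fV n k * fV n k) +
        2 * n.choose (k+1) * (2 ^ n * fV n (k+1)) := by
      rw [h2]
      have : 0 ≤ 2 ^ n * (n.choose (k+1) * n.choose (k+1)) := Nat.zero_le _
      nlinarith
    have h4 := Nat.mul_le_mul_left (2 * n.choose (k+1)) h1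
    calc _ ≤ _ := h3
      _ ≤ _ := Nat.add_le_add ih h4
      _ = _ := by ring

theorem cb_bound (m : ℕ) (hm : 16 ≤ m) : 2 * 27 ^ m ≤ 8 ^ m * m.centralBinom := by
  induction m, hm using Nat.le_induction with
  | base =>
    rw [Nat.centralBinom, ← chs_eq]
    decide +kernel
  | succ m hm ih =>
    have h := Nat.succ_mul_centralBinom_succ m
    refine le_of_mul_le_mul_left (a := m+1) ?_ (Nat.succ_pos m)
    calc (m+1) * (2 * 27 ^ (m+1)) = 27 * (m+1) * (2 * 27 ^ m) := by ring
      _ ≤ 16 * (2 * m + 1) * (8 ^ m * m.centralBinom) := Nat.mul_le_mul (by omega) ih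
      _ = 8 ^ (m+1) * (2 * (2 * m + 1) * m.centralBinom) := by ring
      _ = _ := by rw [← h]; ring

theorem choose_bound (n r : ℕ) (hn : 36 ≤ n) (hr : 2 * r ≤ n) :
    2 * 3 ^ (n + r) ≤ 2 ^ (n + r) * n.choose (n / 2) := by
  have key : 2 * 3 ^ (n + n/2) ≤ 2 ^ (n + n/2) * n.choose (n / 2) := by
    obtain ⟨m, rfl | rfl⟩ := Nat.even_or_odd' n
    · have h := cb_bound m (by omega)
      rw [show 2 * m / 2 = m by omega, show 2 * m + m = 3 * m by ring, pow_mul, pow_mul]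
      exact h
    · have h := cb_bound (m+1) (by omega)
      rw [show (2 * m + 1) / 2 = m by omega, show 2 * m + 1 + m = 3 * m + 1 by ring, pow_succ,
        pow_succ, pow_mul, pow_mul]
      have h2 : (m+1).centralBinom = 2 * (2*m+1).choose m := by
        rw [Nat.centralBinom, show 2 * (m+1) = (2*m+1)+1 by ring, Nat.choose_succ_succ,
          Nat.choose_symm_half]
        ring
      rw [h2, pow_succ, pow_succ] at h
      norm_num at h ⊢
      nlinarith [Nat.zero_le (27 ^ m)]
  obtain ⟨d, hd⟩ := Nat.exists_eq_add_of_le (show r ≤ n/2 by omega)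
  generalize n.choose (n/2) = c at *
  rw [hd, ← add_assoc, pow_add, pow_add 2 (n+r)] at key
  refine le_of_mul_le_mul_right (a := 2 ^ d) ?_ (by positivity)
  calc 2 * 3 ^ (n+r) * 2 ^ d ≤ 2 * 3 ^ (n+r) * 3 ^ d :=
        Nat.mul_le_mul_left _ (Nat.pow_le_pow_left (by norm_num) d)
    _ = 2 * (3 ^ (n+r) * 3 ^ d) := by ring
    _ ≤ _ := key
    _ = _ := by ring

theorem large_cases (n r : ℕ) (hn : 36 ≤ n) (hr : 2 * r ≤ n) :
    fS n r (r+1) ≤ n.choose (n/2) * fA n r (r+1) := by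
  have h1 : 2 ^ n * fS n r (r+1) ≤ 2 * 3 ^ n * ∑ i ∈ Finset.range (r+1),
      n.choose i * ∑ j ∈ Finset.range (r-i+1), n.choose j * 2 ^ j := by
    rw [fS_eq, Finset.mul_sum, Finset.mul_sum]
    refine Finset.sum_le_sum fun i _ => ?_
    calc _ ≤ n.choose i * (2 ^ n * (fV n (r-i) * fV n (r-i))) := by
          rw [mul_left_comm]
          gcongr
          omega
      _ ≤ n.choose i * _ := Nat.mul_le_mul_left _ (sq_bound n (r-i))
      _ = _ := by ring
  rw [conv_sum] at h1
  have h2 : 2 ^ r * (∑ s ∈ Finset.range (r+1), ∑ x ∈ Finset.HasAntidiagonal.antidiagonal s,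
      n.choose x.1 * (n.choose x.2 * 2 ^ x.2)) ≤ 3 ^ r * fA n r (r+1) := by
    rw [fA_choose, Finset.mul_sum, Finset.mul_sum]
    refine Finset.sum_le_sum fun s hs => ?_
    obtain ⟨d, hd⟩ := Nat.exists_eq_add_of_le (show s ≤ r by simpa [Nat.lt_succ_iff] using hs)
    have := P_bound n s
    rw [hd, pow_add, pow_add, mul_comm (2 ^ s), mul_comm (3 ^ s), mul_assoc, mul_assoc]
    exact Nat.mul_le_mul (Nat.pow_le_pow_left (by norm_num) d) this
  have h3 := choose_bound n r hn hr
  refine le_of_mul_le_mul_left (a := 2 ^ (n+r)) ?_ (by positivity)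
  generalize (∑ s ∈ Finset.range (r+1), ∑ x ∈ Finset.HasAntidiagonal.antidiagonal s,
      n.choose x.1 * (n.choose x.2 * 2 ^ x.2)) = T at *
  calc 2 ^ (n+r) * fS n r (r+1) = 2 ^ r * (2 ^ n * fS n r (r+1)) := by ring
    _ ≤ 2 ^ r * (2 * 3 ^ n * T) := Nat.mul_le_mul_left _ h1
    _ = 2 * 3 ^ n * (2 ^ r * T) := by ring
    _ ≤ 2 * 3 ^ n * (3 ^ r * fA n r (r+1)) := Nat.mul_le_mul_left _ h2
    _ = 2 * 3 ^ (n+r) * fA n r (r+1) := by ring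
    _ ≤ 2 ^ (n + r) * n.choose (n / 2) * fA n r (r+1) := Nat.mul_le_mul_right _ h3
    _ = _ := by ring

theorem all_cases (n r : ℕ) (hr : 2 * r ≤ n) :
    fS n r (r+1) ≤ n.choose (n/2) * fA n r (r+1) := by
  by_cases hn : n < 36
  · rw [← chs_eq]
    exact small_cases n hn r (by omega)
  · exact large_cases n r (by omega) hr

theorem sum_weight (n : ℕ) (f : ℕ → ℕ) : ∑ x : Fin n → ZMod 2, f (hammingNorm x) =
    ∑ i ∈ Finset.range (n+1), n.choose i * f i := by
  have h := Finset.sum_powerset_apply_card f (x := (Finset.univ : Finset (Fin n)))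
  simp only [Finset.card_univ, Fintype.card_fin, smul_eq_mul] at h
  rw [← h]
  refine Finset.sum_bij' (fun x _ => Finset.univ.filter (fun i => x i ≠ 0))
    (fun s _ => fun i => if i ∈ s then 1 else 0) ?_ ?_ ?_ ?_ ?_
  · simp
  · simp
  · intro x _
    funext i
    simp only [Finset.mem_filter, Finset.mem_univ, true_and]
    have h01 : ∀ a : ZMod 2, a = 0 ∨ a = 1 := by decide
    rcases h01 (x i) with h | h <;> simp [h]
  · intro s _
    ext i
    simp
  · intro x _
    simp [hammingNorm]

theorem sum_weight_le (n r : ℕ) (hr : r ≤ n) (f : ℕ → ℕ) :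
    ∑ x : Fin n → ZMod 2, (if hammingNorm x ≤ r then f (hammingNorm x) else 0) =
    ∑ i ∈ Finset.range (r+1), n.choose i * f i := by
  rw [sum_weight n (fun i => if i ≤ r then f i else 0)]
  rw [← Finset.sum_subset (s₁ := Finset.range (r+1))]
  · refine Finset.sum_congr rfl fun i hi => ?_
    rw [if_pos (by simpa [Nat.lt_succ_iff] using hi)]
  · intro i; simp; omega
  · intro i _ hi
    rw [if_neg (by simpa [Nat.lt_succ_iff] using hi)]
    simp

theorem card_ball (n r i : ℕ) (hr : r ≤ n) :
    (Finset.univ.filter (fun y : Fin n → ZMod 2 => i + hammingNorm y ≤ r)).card =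
      if i ≤ r then fV n (r - i) else 0 := by
  split_ifs with h
  · have := sum_weight_le n (r-i) (by omega) (fun _ => 1)
    rw [fV_eq, Finset.card_filter]
    simp only [mul_one] at this
    rw [← this]
    refine Finset.sum_congr rfl fun y _ => ?_
    congr 1
    exact propext (by omega)
  · rw [Finset.card_eq_zero, Finset.filter_eq_empty_iff]
    intro y _
    omega

theorem norm_append (n : ℕ) (x y : Fin n → ZMod 2) :
    hammingNorm (Fin.append x y) = hammingNorm x + hammingNorm y := by
  simp only [hammingNorm, Finset.card_filter, Fin.sum_univ_add, Fin.append_left, Fin.append_right]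

theorem main_aux (n N r : ℕ) (hN : N = n + n) (hr : 2 * r ≤ n)
    (A : Finset (Fin N → ZMod 2))
    (hA : A = Finset.univ.filter (fun x => hammingNorm x ≤ r))
    (S : Finset ((Fin N → ZMod 2) × (Fin N → ZMod 2)))
    (hS : S = (A ×ˢ A).filter (fun p =>
      p.1 ≠ p.2 ∧ ∀ i : Fin N, (i : ℕ) < n → p.1 i = p.2 i)) :
    S.card ≤ n.choose (n / 2) * A.card := by
  subst hN
  have hAc : A.card = fA n r (r+1) := by
    rw [hA, Finset.card_filter, ← (Fin.appendEquiv n n).sum_comp, Fintype.sum_prod_type, fA_eq,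
      ← sum_weight_le n r (by omega) (fun i => fV n (r-i))]
    refine Finset.sum_congr rfl fun x _ => ?_
    rw [← card_ball n r _ (by omega), Finset.card_filter]
    refine Finset.sum_congr rfl fun y _ => ?_
    rw [← norm_append]
    rfl
  have hSc : S.card ≤ fS n r (r+1) := by
    let B : (Fin n → ZMod 2) → Finset (Fin n → ZMod 2) := fun x =>
      Finset.univ.filter (fun y => hammingNorm x + hammingNorm y ≤ r)
    have hT : (Finset.univ.sigma (fun x => (B x).offDiag)).card = fS n r (r+1) := by
      rw [Finset.card_sigma, fS_eq,
        ← sum_weight_le n r (by omega) (fun i => fV n (r-i) * (fV n (r-i) - 1))]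
      refine Finset.sum_congr rfl fun x _ => ?_
      rw [Finset.offDiag_card, card_ball n r _ (by omega)]
      split_ifs
      · rw [Nat.mul_sub, mul_one]
      · rfl
    rw [← hT]
    have hmem : ∀ a : Fin (n+n) → ZMod 2, ∃ x y, a = Fin.append x y := fun a =>
      ⟨_, _, (Fin.append_castAdd_natAdd (f := a)).symm⟩
    have hagree : ∀ p ∈ S, ∃ x y y', p = (Fin.append x y, Fin.append x y') ∧ y ≠ y' ∧
        hammingNorm x + hammingNorm y ≤ r ∧ hammingNorm x + hammingNorm y' ≤ r := by
      rintro ⟨a, b⟩ hp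
      obtain ⟨x, y, rfl⟩ := hmem a
      obtain ⟨x', y', rfl⟩ := hmem b
      rw [hS, hA] at hp
      simp only [Finset.mem_filter, Finset.mem_product, Finset.mem_univ, true_and,
        norm_append] at hp
      obtain ⟨⟨h1, h2⟩, h3, h4⟩ := hp
      have hx : x = x' := by
        funext i
        have := h4 (Fin.castAdd n i) (by simp)
        simpa using this
      subst hx
      exact ⟨x, y, y', rfl, fun h => h3 (by rw [h]), h1, h2⟩
    refine Finset.card_le_card_of_surjOn
      (fun q => (Fin.append q.1 q.2.1, Fin.append q.1 q.2.2)) ?_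
    intro p hp
    obtain ⟨x, y, y', rfl, h1, h2, h3⟩ := hagree p hp
    refine ⟨⟨x, (y, y')⟩, ?_, rfl⟩
    simp [B, h1, h2, h3]
  rw [hAc]
  exact hSc.trans (all_cases n r hr)

/-- Let `A` be the Hamming ball of radius `r ≤ n/2` around `0` in `𝔽₂^{2n}`,
and `S` the set of ordered pairs of distinct points of `A` agreeing on the
first `n` coordinates. Then `|S| ≤ C(n, ⌊n/2⌋) · |A|`. -/
theorem stmt_17 (n r : ℕ) (hr : 2 * r ≤ n)
    (A : Finset (Fin (2 * n) → ZMod 2))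
    (hA : A = Finset.univ.filter (fun x => hammingNorm x ≤ r))
    (S : Finset ((Fin (2 * n) → ZMod 2) × (Fin (2 * n) → ZMod 2)))
    (hS : S = (A ×ˢ A).filter (fun p =>
      p.1 ≠ p.2 ∧ ∀ i : Fin (2 * n), (i : ℕ) < n → p.1 i = p.2 i)) :
    S.card ≤ n.choose (n / 2) * A.card := by
  exact main_aux n (2 * n) r (two_mul n) hr A hA S hS
end
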